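/- Let μ• ∈ 𝒱 and let P(μ•) = {h ∈ V : h ≥_w μ_w for all w ∈ W}. Then for every w ∈ W and i ∈ I, the vertex μ_w belongs to P(μ•) and M_{w·Λ_i} = min{ (w·Λ_i)(h) : h ∈ P(μ•) }; consequently the edge datum (M_{w·Λ_i}) is determined by the polytope P(μ•) alone. -/

import Mathlib

/-! The fundamental weights form the basis dual to the simple coroots, so `Λ_i` reads off the `i`-th
coefficient of an element of the coroot cone and `w·Λ_i` is monotone for `≥_w`. Every point `h` of
`P(μ•)` satisfies `h ≥_w μ_w`, and `μ_w` itself lies in `P(μ•)`, so the minimum of `w·Λ_i` is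
attained at `μ_w`. -/

namespace MV

/-- The action of a permutation `w` on `ℝ^N`: `(w·x)_k = x_{w⁻¹(k)}`. -/
def act (ℓ : ℕ) (w : Equiv.Perm (Fin (ℓ+1))) (x : Fin (ℓ+1) → ℝ) : Fin (ℓ+1) → ℝ :=
  fun k => x (w⁻¹ k)

/-- The subspace `V = {x ∈ ℝ^N : Σ x_k = 0}`. -/
def Vsub (ℓ : ℕ) : Set (Fin (ℓ+1) → ℝ) := {x | ∑ k, x k = 0}

/-- The simple coroot `h_i = e_i - e_{i+1}` (here `i : Fin ℓ` encodes the 1-based index `i+1`). -/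
def coroot (ℓ : ℕ) (i : Fin ℓ) : Fin (ℓ+1) → ℝ :=
  fun k => (if (k : ℕ) = (i : ℕ) then 1 else 0) - (if (k : ℕ) = (i : ℕ) + 1 then 1 else 0)

/-- The cone `Σ_{j∈I} ℝ_{≥0} h_j`. -/
def corootCone (ℓ : ℕ) : Set (Fin (ℓ+1) → ℝ) :=
  {x | ∃ c : Fin ℓ → ℝ, (∀ j, 0 ≤ c j) ∧ x = ∑ j, c j • coroot ℓ j}

/-- The partial order `h ≥_w h'`. -/
def geOrd (ℓ : ℕ) (w : Equiv.Perm (Fin (ℓ+1))) (h h' : Fin (ℓ+1) → ℝ) : Prop :=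
  act ℓ w⁻¹ (h - h') ∈ corootCone ℓ

/-- The simple reflection `s_i`, the transposition of (1-based) `i` and `i+1`. -/
def simpleRefl (ℓ : ℕ) (i : Fin ℓ) : Equiv.Perm (Fin (ℓ+1)) :=
  Equiv.swap i.castSucc i.succ

/-- The longest element `w₀ : k ↦ N+1-k`. -/
def w0 (ℓ : ℕ) : Equiv.Perm (Fin (ℓ+1)) := Fin.revPerm

/-- The chamber weight functional `w·Λ_i : x ↦ x_{w(1)} + ⋯ + x_{w(i)}`. -/
def chamberWt (ℓ : ℕ) (w : Equiv.Perm (Fin (ℓ+1))) (i : Fin ℓ) (x : Fin (ℓ+1) → ℝ) : ℝ :=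
  ∑ k ∈ Finset.univ.filter (fun k : Fin (ℓ+1) => (k : ℕ) ≤ (i : ℕ)), x (w k)

/-- The set `𝒱` of GGMS data. -/
def calV (ℓ : ℕ) : Set (Equiv.Perm (Fin (ℓ+1)) → Fin (ℓ+1) → ℝ) :=
  {μ | (∀ w, μ w ∈ Vsub ℓ) ∧ (∀ w w', geOrd ℓ w (μ w') (μ w)) ∧ μ (w0 ℓ) = 0}

/-- The Cartan matrix of type `A_ℓ`. -/
def cartan (ℓ : ℕ) (i j : Fin ℓ) : ℝ :=
  if i = j then 2 else if (i : ℕ) + 1 = (j : ℕ) ∨ (j : ℕ) + 1 = (i : ℕ) then -1 else 0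

/-- The linear involution `J : (Jx)_k = -x_{N+1-k}`. -/
def Jmap (ℓ : ℕ) (x : Fin (ℓ+1) → ℝ) : Fin (ℓ+1) → ℝ := fun k => - x k.rev

/-- Nat-indexed (0-based) simple coroot, used for the folded coroots. -/
def corootN (ℓ : ℕ) (j : ℕ) : Fin (ℓ+1) → ℝ :=
  fun k => (if (k : ℕ) = j then 1 else 0) - (if (k : ℕ) = j + 1 then 1 else 0)

/-- The folded simple coroot `h_j^ω` (here `j : Fin n` encodes the 1-based index `j+1`):
`h_j^ω = h_j + h_{ℓ+1-j}` for `1 ≤ j ≤ n-1`, `h_n^ω = h_n` if `ℓ = 2n-1`, and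
`h_n^ω = 2(h_n + h_{n+1})` if `ℓ = 2n`. -/
def fcoroot (ℓ n : ℕ) (j : Fin n) : Fin (ℓ+1) → ℝ :=
  if (j : ℕ) + 1 < n then corootN ℓ j + corootN ℓ (ℓ - 1 - j)
  else if ℓ = 2 * n - 1 then corootN ℓ j
  else (2 : ℝ) • (corootN ℓ j + corootN ℓ ((j : ℕ) + 1))

/-- The folded coroot cone `Σ_{j=1}^{n} ℝ_{≥0} h_j^ω`. -/
def fcone (ℓ n : ℕ) : Set (Fin (ℓ+1) → ℝ) :=
  {x | ∃ c : Fin n → ℝ, (∀ j, 0 ≤ c j) ∧ x = ∑ j, c j • fcoroot ℓ n j}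


/-- The simple transposition `s_{a+1}` (0-based `a`) in the symmetric group of `{1,…,m+1}`. -/
def swN (m a : ℕ) : Equiv.Perm (Fin (m+1)) :=
  if h : a + 1 ≤ m then Equiv.swap ⟨a, by omega⟩ ⟨a + 1, by omega⟩ else 1

end MV

open MV

namespace MV

variable {ℓ : ℕ}

/-- The fundamental weight `Λ_i : x ↦ x_1 + ⋯ + x_i` as a linear functional on `ℝ^N`; as in
`coroot`, `i : Fin ℓ` encodes the 1-based index `i + 1`. -/
def fundamentalWeight (i : Fin ℓ) : (Fin (ℓ + 1) → ℝ) →ₗ[ℝ] ℝ :=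
  ∑ k ∈ Finset.Iic i.castSucc, LinearMap.proj k

/-- The polytope `P(μ•)` cut out by the family `μ•`: the points `h` of `V` with `h ≥_v μ_v` for
all `v`. -/
def polytope (μ : Equiv.Perm (Fin (ℓ + 1)) → Fin (ℓ + 1) → ℝ) : Set (Fin (ℓ + 1) → ℝ) :=
  {h | h ∈ Vsub ℓ ∧ ∀ v, geOrd ℓ v h (μ v)}

lemma coroot_eq_single_sub_single (j : Fin ℓ) :
    coroot ℓ j = Pi.single j.castSucc 1 - Pi.single j.succ 1 := by
  ext k
  simp [coroot, Pi.single_apply, Fin.ext_iff]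

lemma fundamentalWeight_single (i : Fin ℓ) (k : Fin (ℓ + 1)) (a : ℝ) :
    fundamentalWeight i (Pi.single k a) = if k ≤ i.castSucc then a else 0 := by
  simp [fundamentalWeight]

lemma fundamentalWeight_coroot (i j : Fin ℓ) :
    fundamentalWeight i (coroot ℓ j) = if i = j then 1 else 0 := by
  rw [coroot_eq_single_sub_single, map_sub, fundamentalWeight_single, fundamentalWeight_single]
  grind

lemma fundamentalWeight_sum_smul_coroot (i : Fin ℓ) (c : Fin ℓ → ℝ) :
    fundamentalWeight i (∑ j, c j • coroot ℓ j) = c i := by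
  simp [fundamentalWeight_coroot]

lemma fundamentalWeight_nonneg_of_mem_corootCone (i : Fin ℓ) {x : Fin (ℓ + 1) → ℝ}
    (hx : x ∈ corootCone ℓ) : 0 ≤ fundamentalWeight i x := by
  obtain ⟨c, hc, rfl⟩ := hx
  rw [fundamentalWeight_sum_smul_coroot]
  exact hc i

lemma chamberWt_eq_fundamentalWeight_act (w : Equiv.Perm (Fin (ℓ + 1))) (i : Fin ℓ)
    (x : Fin (ℓ + 1) → ℝ) : chamberWt ℓ w i x = fundamentalWeight i (act ℓ w⁻¹ x) := by
  simp only [chamberWt, fundamentalWeight, act, inv_inv, LinearMap.sum_apply, LinearMap.proj_apply]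
  congr 1
  ext k
  simp [Fin.le_def]

lemma chamberWt_sub (w : Equiv.Perm (Fin (ℓ + 1))) (i : Fin ℓ) (x y : Fin (ℓ + 1) → ℝ) :
    chamberWt ℓ w i (x - y) = chamberWt ℓ w i x - chamberWt ℓ w i y :=
  Finset.sum_sub_distrib _ _

lemma chamberWt_le_chamberWt_of_geOrd {w : Equiv.Perm (Fin (ℓ + 1))} (i : Fin ℓ)
    {h h' : Fin (ℓ + 1) → ℝ} (hh' : geOrd ℓ w h h') :
    chamberWt ℓ w i h' ≤ chamberWt ℓ w i h := by
  rw [← sub_nonneg, ← chamberWt_sub, chamberWt_eq_fundamentalWeight_act]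
  exact fundamentalWeight_nonneg_of_mem_corootCone i hh'

lemma isLeast_chamberWt_image_polytope {μ : Equiv.Perm (Fin (ℓ + 1)) → Fin (ℓ + 1) → ℝ}
    {w : Equiv.Perm (Fin (ℓ + 1))} (hw : μ w ∈ polytope μ) (i : Fin ℓ) :
    IsLeast (chamberWt ℓ w i '' polytope μ) (chamberWt ℓ w i (μ w)) := by
  refine ⟨Set.mem_image_of_mem _ hw, ?_⟩
  rintro _ ⟨h, hh, rfl⟩
  exact chamberWt_le_chamberWt_of_geOrd i (hh.2 w)

end MV

theorem stmt19_general {ℓ : ℕ} {μ : Equiv.Perm (Fin (ℓ + 1)) → Fin (ℓ + 1) → ℝ}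
    (hV : ∀ w, μ w ∈ Vsub ℓ) (hμ : ∀ w w', geOrd ℓ w (μ w') (μ w))
    (w : Equiv.Perm (Fin (ℓ + 1))) (i : Fin ℓ) :
    μ w ∈ polytope μ ∧ IsLeast (chamberWt ℓ w i '' polytope μ) (chamberWt ℓ w i (μ w)) :=
  have hw : μ w ∈ polytope μ := ⟨hV w, fun v => hμ v w⟩
  ⟨hw, isLeast_chamberWt_image_polytope hw i⟩

/-- each `μ_w` belongs to `P(μ•)`, and `M_{w·Λ_i}` is the minimum of the
functional `w·Λ_i` over `P(μ•)`. -/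
theorem stmt19 (ℓ : ℕ) (hℓ : 3 ≤ ℓ)
    (μ : Equiv.Perm (Fin (ℓ+1)) → Fin (ℓ+1) → ℝ) (hμ : μ ∈ calV ℓ)
    (w : Equiv.Perm (Fin (ℓ+1))) (i : Fin ℓ) :
    μ w ∈ {h | h ∈ Vsub ℓ ∧ ∀ v, geOrd ℓ v h (μ v)} ∧
    IsLeast (chamberWt ℓ w i '' {h | h ∈ Vsub ℓ ∧ ∀ v, geOrd ℓ v h (μ v)})
      (chamberWt ℓ w i (μ w)) :=
  stmt19_general hμ.1 hμ.2.1 w i
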